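/- arXiv:2403.14206 — 3 statements merged into one kernel-verified Lean document; each statement's English description precedes it below -/
import Mathlib

section
/- Let L ≥ 1 and let G_ℓ ∈ ℝ^{3×3}, ℓ = 1,…,L, be symmetric positive definite matrices; set γ_ℓ(p) = (p·G_ℓ p)^{1/2} and γ(p) = Σ_{ℓ=1}^L γ_ℓ(p). Then for every p ∈ ℝ³ with p ≠ 0 and every q ∈ ℝ³ one has (γ(p) Σ_{ℓ=1}^L γ_ℓ(p)^{-1} G_ℓ p) · (p − q) ≥ γ(p)·(γ(p) − γ(q)). (Here γ(p) Σ_ℓ γ_ℓ(p)^{-1} G_ℓ p is the gradient A_p(p) of A = ½γ² at p.) -/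
/-!
Each `γ_ℓ` is the norm of the inner product `(p, q) ↦ p ⋅ G_ℓ q`, so Cauchy–Schwarz
(`mulVec_dotProduct_le_gammaEll_mul`) gives `G_ℓ p ⋅ q ≤ γ_ℓ(p) γ_ℓ(q)`. Together with
`G_ℓ p ⋅ p = γ_ℓ(p)²` and division by `γ_ℓ(p) > 0`, this yields
`γ_ℓ(p)⁻¹ G_ℓ p ⋅ (p - q) ≥ γ_ℓ(p) - γ_ℓ(q)`. Summing over `ℓ` and multiplying by `γ(p) ≥ 0`
gives the claim.
-/

open Matrix BigOperators

/-- The single-summand density `γ_ℓ(p) = (p ⋅ G_ℓ p)^{1/2}` of a BGN anisotropy. -/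
noncomputable def gammaEll {L : ℕ} (G : Fin L → Matrix (Fin 3) (Fin 3) ℝ)
    (ℓ : Fin L) (p : Fin 3 → ℝ) : ℝ :=
  Real.sqrt (p ⬝ᵥ (G ℓ).mulVec p)

/-- The BGN anisotropy `γ(p) = ∑_ℓ (p ⋅ G_ℓ p)^{1/2}`. -/
noncomputable def gammaBGN {L : ℕ} (G : Fin L → Matrix (Fin 3) (Fin 3) ℝ)
    (p : Fin 3 → ℝ) : ℝ :=
  ∑ ℓ, gammaEll G ℓ p

lemma gammaEll_sq {L : ℕ} {G : Fin L → Matrix (Fin 3) (Fin 3) ℝ} {ℓ : Fin L}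
    (hG : (G ℓ).PosDef) (p : Fin 3 → ℝ) :
    gammaEll G ℓ p ^ 2 = (G ℓ).mulVec p ⬝ᵥ p := by
  rw [gammaEll, Real.sq_sqrt, dotProduct_comm]
  simpa using hG.posSemidef.dotProduct_mulVec_nonneg p

lemma gammaEll_pos {L : ℕ} {G : Fin L → Matrix (Fin 3) (Fin 3) ℝ} {ℓ : Fin L}
    (hG : (G ℓ).PosDef) {p : Fin 3 → ℝ} (hp : p ≠ 0) : 0 < gammaEll G ℓ p :=
  Real.sqrt_pos.mpr (by simpa using hG.dotProduct_mulVec_pos hp)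

/-- Cauchy–Schwarz for the inner product induced by `G_ℓ`. -/
lemma mulVec_dotProduct_le_gammaEll_mul {L : ℕ} {G : Fin L → Matrix (Fin 3) (Fin 3) ℝ}
    {ℓ : Fin L} (hG : (G ℓ).PosDef) (p q : Fin 3 → ℝ) :
    (G ℓ).mulVec p ⬝ᵥ q ≤ gammaEll G ℓ p * gammaEll G ℓ q := by
  have hsymm : (G ℓ).mulVec q ⬝ᵥ p = (G ℓ).mulVec p ⬝ᵥ q := by
    have hT : (G ℓ)ᵀ = G ℓ := by simpa using hG.isHermitian.eq
    rw [dotProduct_comm, dotProduct_mulVec, ← mulVec_transpose, hT]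
  -- The quadratic polynomial `x ↦ γ_ℓ(x p - q)²` is nonnegative, so its discriminant is `≤ 0`.
  have hdisc := discrim_le_zero (a := gammaEll G ℓ p ^ 2) (b := -2 * ((G ℓ).mulVec p ⬝ᵥ q))
    (c := gammaEll G ℓ q ^ 2) (fun x => by
      have h := sq_nonneg (gammaEll G ℓ (x • p - q))
      rw [gammaEll_sq hG] at h ⊢
      rw [gammaEll_sq hG]
      simp only [mulVec_sub, mulVec_smul, sub_dotProduct, dotProduct_sub, smul_dotProduct,
        dotProduct_smul, smul_eq_mul, hsymm] at h
      linarith)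
  rw [discrim] at hdisc
  refine le_trans (le_abs_self _) <| abs_le_of_sq_le_sq ?_ (mul_nonneg (Real.sqrt_nonneg _) (Real.sqrt_nonneg _))
  nlinarith

/-- The convexity inequality for a single summand `γ_ℓ`, whose gradient at `p` is
`γ_ℓ(p)⁻¹ G_ℓ p`. -/
lemma gammaEll_sub_le {L : ℕ} {G : Fin L → Matrix (Fin 3) (Fin 3) ℝ} {ℓ : Fin L}
    (hG : (G ℓ).PosDef) {p : Fin 3 → ℝ} (hp : p ≠ 0) (q : Fin 3 → ℝ) :
    gammaEll G ℓ p - gammaEll G ℓ q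
      ≤ ((gammaEll G ℓ p)⁻¹ • (G ℓ).mulVec p) ⬝ᵥ (p - q) := by
  have hpos := gammaEll_pos hG hp
  rw [smul_dotProduct, smul_eq_mul, dotProduct_sub, ← gammaEll_sq hG, le_inv_mul_iff₀ hpos]
  linarith [mulVec_dotProduct_le_gammaEll_mul hG p q]

/-- **Monotonicity inequality (3.5a) of Lemma 3.2**: for the BGN anisotropy
`γ(p) = ∑_ℓ (p ⋅ G_ℓ p)^{1/2}` with `G_ℓ` symmetric positive definite, the gradient
`A_p(p) = γ(p) ∑_ℓ γ_ℓ(p)⁻¹ G_ℓ p` of `A = ½γ²` satisfies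
`A_p(p) ⋅ (p − q) ≥ γ(p)(γ(p) − γ(q))` for all `p ≠ 0` and all `q`. -/
theorem gammaBGN_grad_monotone (L : ℕ) (hL : 1 ≤ L)
    (G : Fin L → Matrix (Fin 3) (Fin 3) ℝ) (hG : ∀ ℓ, (G ℓ).PosDef)
    (p q : Fin 3 → ℝ) (hp : p ≠ 0) :
    (gammaBGN G p • ∑ ℓ, (gammaEll G ℓ p)⁻¹ • (G ℓ).mulVec p) ⬝ᵥ (p - q)
      ≥ gammaBGN G p * (gammaBGN G p - gammaBGN G q) := by
  rw [smul_dotProduct, smul_eq_mul, sum_dotProduct, ge_iff_le]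
  refine mul_le_mul_of_nonneg_left ?_ (Finset.sum_nonneg fun ℓ _ => Real.sqrt_nonneg _)
  rw [gammaBGN, gammaBGN, ← Finset.sum_sub_distrib]
  exact Finset.sum_le_sum fun ℓ _ => gammaEll_sub_le (hG ℓ) hp q
end

section
/- Let L ≥ 1 and let G_ℓ ∈ ℝ^{3×3}, ℓ = 1,…,L, be symmetric positive definite matrices; set γ_ℓ(p) = (p·G_ℓ p)^{1/2}, γ(p) = Σ_{ℓ=1}^L γ_ℓ(p) and A(p) = ½γ(p)². Then for every p ∈ ℝ³ and every q ∈ ℝ³ with q ≠ 0 one has A(p) ≤ ½ γ(q) Σ_{ℓ=1}^L γ_ℓ(q)^{-1} γ_ℓ(p)². -/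
open Matrix BigOperators

/-- **Inequality (3.5b) of Lemma 3.2**: for the BGN anisotropy
`γ(p) = ∑_ℓ (p ⋅ G_ℓ p)^{1/2}` with `G_ℓ` symmetric positive definite and
`A(p) = ½γ(p)²`, one has `A(p) ≤ ½ γ(q) ∑_ℓ γ_ℓ(q)⁻¹ γ_ℓ(p)²`
for all `p` and all `q ≠ 0`. -/
theorem gammaBGN_A_upper_bound (L : ℕ) (hL : 1 ≤ L)
    (G : Fin L → Matrix (Fin 3) (Fin 3) ℝ) (hG : ∀ ℓ, (G ℓ).PosDef)
    (p q : Fin 3 → ℝ) (hq : q ≠ 0) :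
    (1 / 2) * (gammaBGN G p) ^ 2
      ≤ (1 / 2) * gammaBGN G q * ∑ ℓ, (gammaEll G ℓ q)⁻¹ * (gammaEll G ℓ p) ^ 2 := by
  have hpos : ∀ ℓ, 0 < gammaEll G ℓ q := fun ℓ =>
    Real.sqrt_pos.mpr (by simpa using (hG ℓ).dotProduct_mulVec_pos hq)
  -- Cauchy–Schwarz, with `γ_ℓ(p)²` factored as `γ_ℓ(q) * (γ_ℓ(q)⁻¹ γ_ℓ(p)²)`.
  have key : (gammaBGN G p) ^ 2
      ≤ gammaBGN G q * ∑ ℓ, (gammaEll G ℓ q)⁻¹ * (gammaEll G ℓ p) ^ 2 :=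
    Finset.sum_sq_le_sum_mul_sum_of_sq_le_mul Finset.univ
      (fun ℓ _ => (hpos ℓ).le)
      (fun ℓ _ => mul_nonneg (inv_nonneg.mpr (hpos ℓ).le) (sq_nonneg _))
      (fun ℓ _ => (mul_inv_cancel_left₀ (hpos ℓ).ne' _).ge)
  rw [mul_assoc]
  exact mul_le_mul_of_nonneg_left key (by norm_num)
end

section
/- Let λ > 0, α ∈ ℝ, T > 0, and let θ₁, θ₂ : [0,T) → (π/2, π) be differentiable functions with θ₁(t) ≠ θ₂(t) for all t, satisfying the ODE system λ θᵢ'(t) = − c₊(t) / sin θᵢ(t) for i = 1,2, where c₊(t) = − α (cot θ₁(t) + cot θ₂(t)) / (ln(tan(θ₁(t)/2)) − ln(tan(θ₂(t)/2))). Then the quantity cos θ₁(t) − cos θ₂(t) is constant in t; i.e., cos θ₁(t) − cos θ₂(t) = cos θ₁(0) − cos θ₂(0) for all t ∈ [0,T). -/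
/-!
Since `sin θᵢ > 0` on `(π/2, π)`, the equation `λ θᵢ' = -c₊ / sin θᵢ` says `(cos θᵢ)' = c₊ / λ`,
which does not depend on `i`. Hence `cos θ₁ - cos θ₂` has zero derivative on the convex set `[0, T)`
and is constant there by the mean value inequality.
-/

open Real

/-- **Conservation law for the Rätz ODE system** (Section 5.2.2): if
`θ₁, θ₂ : [0,T) → (π/2, π)` are differentiable with `θ₁(t) ≠ θ₂(t)`, and satisfy
`λ θᵢ'(t) = − c₊(t) / sin θᵢ(t)` with
`c₊(t) = − α (cot θ₁(t) + cot θ₂(t)) / (ln tan(θ₁(t)/2) − ln tan(θ₂(t)/2))`,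
then `cos θ₁(t) − cos θ₂(t)` is constant in time. -/
theorem cos_diff_invariant (lam α T : ℝ) (hlam : 0 < lam) (hT : 0 < T)
    (θ₁ θ₂ d₁ d₂ c : ℝ → ℝ)
    (hrange₁ : ∀ t ∈ Set.Ico (0 : ℝ) T, θ₁ t ∈ Set.Ioo (π / 2) π)
    (hrange₂ : ∀ t ∈ Set.Ico (0 : ℝ) T, θ₂ t ∈ Set.Ioo (π / 2) π)
    (hne : ∀ t ∈ Set.Ico (0 : ℝ) T, θ₁ t ≠ θ₂ t)
    (hderiv₁ : ∀ t ∈ Set.Ico (0 : ℝ) T, HasDerivWithinAt θ₁ (d₁ t) (Set.Ico 0 T) t)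
    (hderiv₂ : ∀ t ∈ Set.Ico (0 : ℝ) T, HasDerivWithinAt θ₂ (d₂ t) (Set.Ico 0 T) t)
    (hc : ∀ t ∈ Set.Ico (0 : ℝ) T,
      c t = -α * (cos (θ₁ t) / sin (θ₁ t) + cos (θ₂ t) / sin (θ₂ t))
              / (Real.log (tan (θ₁ t / 2)) - Real.log (tan (θ₂ t / 2))))
    (hode₁ : ∀ t ∈ Set.Ico (0 : ℝ) T, lam * d₁ t = -(c t) / sin (θ₁ t))
    (hode₂ : ∀ t ∈ Set.Ico (0 : ℝ) T, lam * d₂ t = -(c t) / sin (θ₂ t)) :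
    ∀ t ∈ Set.Ico (0 : ℝ) T, cos (θ₁ t) - cos (θ₂ t) = cos (θ₁ 0) - cos (θ₂ 0) := by
  have key : ∀ t ∈ Set.Ico (0 : ℝ) T,
      HasDerivWithinAt (fun s => cos (θ₁ s) - cos (θ₂ s)) 0 (Set.Ico 0 T) t := by
    intro t ht
    have flux : ∀ x d : ℝ, x ∈ Set.Ioo (π / 2) π → lam * d = -(c t) / sin x →
        -sin x * d = c t / lam := by
      intro x d hx h
      have hs : 0 < sin x := sin_pos_of_pos_of_lt_pi (by linarith [pi_pos, hx.1]) hx.2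
      rw [eq_div_iff hs.ne'] at h
      rw [eq_div_iff hlam.ne']
      linarith
    have h := (hderiv₁ t ht).cos.sub (hderiv₂ t ht).cos
    rw [flux _ _ (hrange₁ t ht) (hode₁ t ht), flux _ _ (hrange₂ t ht) (hode₂ t ht), sub_self] at h
    exact h
  intro t ht
  have h := (convex_Ico (0 : ℝ) T).norm_image_sub_le_of_norm_hasDerivWithin_le
    (C := 0) key (fun _ _ => norm_zero.le) ⟨le_rfl, hT⟩ ht
  rw [zero_mul] at h
  exact sub_eq_zero.mp (norm_le_zero_iff.mp h)
end
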